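/- Let β₁ and β₂ be strongly equivalent braid words, and let u be the induced bijection between their sets of classical crossings. If two crossings x₁, x₂ of β₁ form a bigon, then u(x₁) and u(x₂) form a bigon in β₂, and the braid words obtained from β₁ and β₂ by the corresponding bigon reductions are again strongly equivalent. -/

import Mathlib

set_option maxHeartbeats 1000000

namespace OneTermBracket

/-- Letters (generators) of free braid words on `n` strands:
`zeta i` is a classical crossing, `tau i` a virtual crossing, `1 ≤ i+1 ≤ n-1`. -/
inductive Letter (n : ℕ) where
  | zeta (i : Fin (n-1))
  | tau  (i : Fin (n-1))
deriving DecidableEq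

namespace Letter

def idx {n : ℕ} : Letter n → Fin (n-1)
  | zeta i => i
  | tau i => i

def isZeta {n : ℕ} : Letter n → Bool
  | zeta _ => true
  | tau _ => false

end Letter

def lo {n : ℕ} (i : Fin (n-1)) : Fin n := ⟨i.1, by have := i.2; omega⟩
def hi {n : ℕ} (i : Fin (n-1)) : Fin n := ⟨i.1 + 1, by have := i.2; omega⟩

/-- The transposition `(i, i+1)` of `{1, …, n}`. -/
def sPerm {n : ℕ} (i : Fin (n-1)) : Equiv.Perm (Fin n) := Equiv.swap (lo i) (hi i)

/-- Each letter acts on positions as the transposition `(i, i+1)`. -/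
def transOf {n : ℕ} (g : Letter n) : Equiv.Perm (Fin n) := sPerm g.idx

/-- The permutation realized by the prefix of length `j` of a braid word,
mapping the top label of a strand to its position at level `j`. -/
def prefPerm {n : ℕ} (w : List (Letter n)) (j : ℕ) : Equiv.Perm (Fin n) :=
  (((w.take j).map transOf).reverse).prod

/-- The permutation `P(β)` of a braid word (top endpoint `k` goes to bottom endpoint `P k`). -/
def permOf {n : ℕ} (w : List (Letter n)) : Equiv.Perm (Fin n) :=
  ((w.map transOf).reverse).prod

/-- The unordered pair of (top labels of the) strands crossing at position `j` of `w`. -/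
def strandsAt {n : ℕ} (w : List (Letter n)) (j : ℕ) : Option (Sym2 (Fin n)) :=
  (w[j]?).map fun g => s((prefPerm w j)⁻¹ (lo g.idx), (prefPerm w j)⁻¹ (hi g.idx))

/-- Component-wise parity determined by a partition `{1,…,n} = N₁ ⊔ N₂` (encoded by
`c : Fin n → Bool`): a classical crossing is odd (`1`) iff its two strands lie in
different parts. Non-classical positions get `0`. -/
def cwParity {n : ℕ} (c : Fin n → Bool) (w : List (Letter n)) (j : ℕ) : ZMod 2 :=
  match w[j]? with
  | some (.zeta i) =>
      if c ((prefPerm w j)⁻¹ (lo i)) = c ((prefPerm w j)⁻¹ (hi i)) then 0 else 1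
  | _ => 0

/-- The defining relations of `F_n` and `FB_n` which do not involve
`ζ_i² = 1` or the classical third Reidemeister move ("strong" moves). -/
inductive RelStrong (n : ℕ) : List (Letter n) → List (Letter n) → Prop
  | tt (i : Fin (n-1)) : RelStrong n [.tau i, .tau i] []
  | virt (i : Fin (n-1)) : RelStrong n [.zeta i, .tau i] [.tau i, .zeta i]
  | far_zz (i j : Fin (n-1)) (h : 2 ≤ Nat.dist i j) :
      RelStrong n [.zeta i, .zeta j] [.zeta j, .zeta i]
  | far_zt (i j : Fin (n-1)) (h : 2 ≤ Nat.dist i j) :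
      RelStrong n [.zeta i, .tau j] [.tau j, .zeta i]
  | far_tt (i j : Fin (n-1)) (h : 2 ≤ Nat.dist i j) :
      RelStrong n [.tau i, .tau j] [.tau j, .tau i]
  | r3v (i j : Fin (n-1)) (h : (j:ℕ) = (i:ℕ) + 1) :
      RelStrong n [.tau i, .tau j, .tau i] [.tau j, .tau i, .tau j]
  | semi (i j : Fin (n-1)) (h : (j:ℕ) = (i:ℕ) + 1) :
      RelStrong n [.tau i, .tau j, .zeta i] [.zeta j, .tau i, .tau j]

/-- The defining relations of `F_n`. -/
inductive RelF (n : ℕ) : List (Letter n) → List (Letter n) → Prop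
  | strong {r1 r2} : RelStrong n r1 r2 → RelF n r1 r2
  | zz (i : Fin (n-1)) : RelF n [.zeta i, .zeta i] []

/-- The defining relations of the free braid group `FB_n`. -/
inductive RelFB (n : ℕ) : List (Letter n) → List (Letter n) → Prop
  | ofF {r1 r2} : RelF n r1 r2 → RelFB n r1 r2
  | r3c (i j : Fin (n-1)) (h : (j:ℕ) = (i:ℕ) + 1) :
      RelFB n [.zeta i, .zeta j, .zeta i] [.zeta j, .zeta i, .zeta j]

/-- One application of a relation from `R` inside a word. -/
def StepOf {n : ℕ} (R : List (Letter n) → List (Letter n) → Prop)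
    (w1 w2 : List (Letter n)) : Prop :=
  ∃ A B r1 r2, R r1 r2 ∧ w1 = A ++ r1 ++ B ∧ w2 = A ++ r2 ++ B

/-- Strong equivalence: all moves of `F_n` except `ζ_i² = 1`. -/
def StrongEq {n : ℕ} (w1 w2 : List (Letter n)) : Prop :=
  Relation.EqvGen (StepOf (RelStrong n)) w1 w2

/-- Equivalence of braid words as elements of `F_n`. -/
def EqF {n : ℕ} (w1 w2 : List (Letter n)) : Prop :=
  Relation.EqvGen (StepOf (RelF n)) w1 w2

/-- Equivalence of braid words as elements of the free braid group `FB_n`. -/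
def EqFB {n : ℕ} (w1 w2 : List (Letter n)) : Prop :=
  Relation.EqvGen (StepOf (RelFB n)) w1 w2

/-- The parity axioms, for a parity `P` defined on the class `C` of braid words.
`P w j` is the parity of the crossing at position `j` of `w` (only classical
positions matter). -/
structure IsParity {n : ℕ} (C : List (Letter n) → Prop)
    (P : List (Letter n) → ℕ → ZMod 2) : Prop where
  /-- Crossings not taking part in a relation keep their parity (part before). -/
  untouched_left : ∀ A B r1 r2, RelFB n r1 r2 →
    C (A ++ r1 ++ B) → C (A ++ r2 ++ B) → ∀ j < A.length,
    P (A ++ r1 ++ B) j = P (A ++ r2 ++ B) j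
  /-- Crossings not taking part in a relation keep their parity (part after). -/
  untouched_right : ∀ A B r1 r2, RelFB n r1 r2 →
    C (A ++ r1 ++ B) → C (A ++ r2 ++ B) → ∀ j < B.length,
    P (A ++ r1 ++ B) (A.length + r1.length + j) = P (A ++ r2 ++ B) (A.length + r2.length + j)
  /-- In commutation-type relations (far commutativity, virtualization), the two
  letters keep their parities. -/
  comm : ∀ A B x y, RelFB n [x, y] [y, x] →
    C (A ++ [x, y] ++ B) → C (A ++ [y, x] ++ B) →
    P (A ++ [x, y] ++ B) A.length = P (A ++ [y, x] ++ B) (A.length + 1) ∧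
    P (A ++ [x, y] ++ B) (A.length + 1) = P (A ++ [y, x] ++ B) A.length
  /-- In a classical second Reidemeister move both crossings have the same parity. -/
  r2c : ∀ A B (i : Fin (n-1)),
    C (A ++ [.zeta i, .zeta i] ++ B) → C (A ++ B) →
    P (A ++ [.zeta i, .zeta i] ++ B) A.length
      = P (A ++ [.zeta i, .zeta i] ++ B) (A.length + 1)
  /-- In a semivirtual move, the classical crossing keeps its parity. -/
  semiv : ∀ A B (i j : Fin (n-1)), (j:ℕ) = (i:ℕ) + 1 →
    C (A ++ [.tau i, .tau j, .zeta i] ++ B) →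
    C (A ++ [.zeta j, .tau i, .tau j] ++ B) →
    P (A ++ [.tau i, .tau j, .zeta i] ++ B) (A.length + 2)
      = P (A ++ [.zeta j, .tau i, .tau j] ++ B) A.length
  /-- In a classical third Reidemeister move the number of odd crossings is even. -/
  r3_even : ∀ A B (i j : Fin (n-1)), (j:ℕ) = (i:ℕ) + 1 →
    C (A ++ [.zeta i, .zeta j, .zeta i] ++ B) →
    C (A ++ [.zeta j, .zeta i, .zeta j] ++ B) →
    P (A ++ [.zeta i, .zeta j, .zeta i] ++ B) A.length
      + P (A ++ [.zeta i, .zeta j, .zeta i] ++ B) (A.length + 1)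
      + P (A ++ [.zeta i, .zeta j, .zeta i] ++ B) (A.length + 2) = 0
  /-- In a classical third Reidemeister move, upper/middle/lower crossings on the
  left correspond to lower/middle/upper crossings on the right with equal parities. -/
  r3_corr : ∀ A B (i j : Fin (n-1)), (j:ℕ) = (i:ℕ) + 1 →
    C (A ++ [.zeta i, .zeta j, .zeta i] ++ B) →
    C (A ++ [.zeta j, .zeta i, .zeta j] ++ B) →
    P (A ++ [.zeta i, .zeta j, .zeta i] ++ B) A.length
      = P (A ++ [.zeta j, .zeta i, .zeta j] ++ B) (A.length + 2) ∧
    P (A ++ [.zeta i, .zeta j, .zeta i] ++ B) (A.length + 1)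
      = P (A ++ [.zeta j, .zeta i, .zeta j] ++ B) (A.length + 1) ∧
    P (A ++ [.zeta i, .zeta j, .zeta i] ++ B) (A.length + 2)
      = P (A ++ [.zeta j, .zeta i, .zeta j] ++ B) A.length

/-- Delete from `w` all classical letters whose parity (given by `par`) is even. -/
def deleteEven {n : ℕ} (w : List (Letter n)) (par : ℕ → ZMod 2) : List (Letter n) :=
  (List.range w.length).filterMap fun j =>
    (w[j]?).bind fun g =>
      match g with
      | .zeta i => if par j = 0 then none else some (.zeta i)
      | .tau i => some (.tau i)

/-- The one-term parity bracket: delete all even classical crossings. -/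
def bracket {n : ℕ} (P : List (Letter n) → ℕ → ZMod 2) (w : List (Letter n)) :
    List (Letter n) :=
  deleteEven w (P w)

/-- Positions of classical crossings of a word. -/
def ZetaPos {n : ℕ} (w : List (Letter n)) : Set ℕ :=
  {j | ∃ i, w[j]? = some (Letter.zeta i)}

/-- The classical crossings at positions `j1 < j2` form a bigon: they lie on the same
pair of strands, and no classical crossing between them lies on either of those strands. -/
def IsBigon {n : ℕ} (w : List (Letter n)) (j1 j2 : ℕ) : Prop :=
  j1 < j2 ∧ j1 ∈ ZetaPos w ∧ j2 ∈ ZetaPos w ∧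
  strandsAt w j1 = strandsAt w j2 ∧
  ∀ k, j1 < k → k < j2 → k ∈ ZetaPos w →
    ∀ e e', strandsAt w j1 = some e → strandsAt w k = some e' → ∀ a ∈ e, a ∉ e'

/-- Delete the letters at two given positions. -/
def delete2 {n : ℕ} (w : List (Letter n)) (j1 j2 : ℕ) : List (Letter n) :=
  (w.eraseIdx (max j1 j2)).eraseIdx (min j1 j2)

/-- One bigon reduction. -/
def BigonStep {n : ℕ} (w w' : List (Letter n)) : Prop :=
  ∃ j1 j2, IsBigon w j1 j2 ∧ w' = delete2 w j1 j2

/-- A word is irreducible if it admits no bigon reduction. -/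
def Irreducible {n : ℕ} (w : List (Letter n)) : Prop := ¬ ∃ j1 j2, IsBigon w j1 j2

/-- Number of classical letters of a word. -/
def countZeta {n : ℕ} (w : List (Letter n)) : ℕ := (w.filter Letter.isZeta).length

/-- `φ` is an isomorphism of the decorated graphs `Γ(w1) ≅ Γ(w2)`, encoded
combinatorially: a bijection of classical crossings preserving the pair of strands
through each crossing, the order of crossings along each strand, and the endpoint
structure (the permutation). -/
structure IsGammaIso {n : ℕ} (w1 w2 : List (Letter n)) (φ : ℕ → ℕ) : Prop where
  maps : ∀ j ∈ ZetaPos w1, φ j ∈ ZetaPos w2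
  inj : ∀ j ∈ ZetaPos w1, ∀ j' ∈ ZetaPos w1, φ j = φ j' → j = j'
  surj : ∀ k ∈ ZetaPos w2, ∃ j ∈ ZetaPos w1, φ j = k
  strands : ∀ j ∈ ZetaPos w1, strandsAt w2 (φ j) = strandsAt w1 j
  order : ∀ j ∈ ZetaPos w1, ∀ j' ∈ ZetaPos w1, j < j' →
    (∃ e e' a, strandsAt w1 j = some e ∧ strandsAt w1 j' = some e' ∧ a ∈ e ∧ a ∈ e') →
    φ j < φ j'
  perm : permOf w1 = permOf w2

/-! ### The groups `F_n` and `FB_n` as presented groups -/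

/-- Generators: `Sum.inl i` is the classical generator `ζ_i`,
`Sum.inr i` is the virtual generator `τ_i`. -/
abbrev GGen (n : ℕ) := Fin (n-1) ⊕ Fin (n-1)

def zg {n : ℕ} (i : Fin (n-1)) : FreeGroup (GGen n) := FreeGroup.of (Sum.inl i)
def tg {n : ℕ} (i : Fin (n-1)) : FreeGroup (GGen n) := FreeGroup.of (Sum.inr i)

/-- The relators of `F_n`. -/
def FRels (n : ℕ) : Set (FreeGroup (GGen n)) :=
  (⋃ i, {zg i * zg i}) ∪ (⋃ i, {tg i * tg i}) ∪
  (⋃ i, {zg i * tg i * (tg i * zg i)⁻¹}) ∪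
  (⋃ (i : Fin (n-1)) (j : Fin (n-1)) (_ : 2 ≤ Nat.dist i j),
    {zg i * zg j * (zg j * zg i)⁻¹, zg i * tg j * (tg j * zg i)⁻¹,
     tg i * tg j * (tg j * tg i)⁻¹}) ∪
  (⋃ (i : Fin (n-1)) (j : Fin (n-1)) (_ : (j:ℕ) = (i:ℕ) + 1),
    {tg i * tg j * tg i * (tg j * tg i * tg j)⁻¹,
     tg i * tg j * zg i * (zg j * tg i * tg j)⁻¹})

/-- The relators of `FB_n`: those of `F_n` together with the classical third
Reidemeister relation. -/
def FBRels (n : ℕ) : Set (FreeGroup (GGen n)) :=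
  FRels n ∪
  (⋃ (i : Fin (n-1)) (j : Fin (n-1)) (_ : (j:ℕ) = (i:ℕ) + 1),
    {zg i * zg j * zg i * (zg j * zg i * zg j)⁻¹})

/-- The group `F_n`. -/
abbrev FGrp (n : ℕ) := PresentedGroup (FRels n)

/-- The free braid group `FB_n`. -/
abbrev FBGrp (n : ℕ) := PresentedGroup (FBRels n)

def zF {n : ℕ} (i : Fin (n-1)) : FGrp n := PresentedGroup.of (Sum.inl i)
def tF {n : ℕ} (i : Fin (n-1)) : FGrp n := PresentedGroup.of (Sum.inr i)

/-- Evaluation of a braid word in `F_n`. -/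
def evalF {n : ℕ} (w : List (Letter n)) : FGrp n :=
  (w.map fun g => match g with
    | Letter.zeta i => zF i
    | Letter.tau i => tF i).prod

/-- For each unordered pair of strands, the mod-2 number of classical letters of `w`
at which these two strands cross (strand labels traced from the top). -/
def crossPar {n : ℕ} : List (Letter n) → Sym2 (Fin n) → ZMod 2
  | [], _ => 0
  | g :: rest, e =>
    (match g with
     | Letter.zeta i => if e = s(lo i, hi i) then (1 : ZMod 2) else 0
     | Letter.tau _ => 0) + crossPar rest (e.map (transOf g))

/-! ### Chord diagrams and the Gaussian parity -/

/-- The setoid on strands given by `SameCycle`; its classes are the orbits of `σ`,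
i.e. the components of the closure. -/
def sameCycleSetoid {n : ℕ} (σ : Equiv.Perm (Fin n)) : Setoid (Fin n) :=
  ⟨σ.SameCycle, ⟨Equiv.Perm.SameCycle.refl σ, Equiv.Perm.SameCycle.symm,
    Equiv.Perm.SameCycle.trans⟩⟩

/-- The rank of a strand in the single cycle of `σ` starting from strand `0`. -/
noncomputable def rankIn {n : ℕ} [NeZero n] (σ : Equiv.Perm (Fin n)) (a : Fin n) : ℕ :=
  ((Function.invFun (fun k : Fin n => (σ ^ (k : ℕ)) 0) a : Fin n) : ℕ)

/-- Coordinates on the core circle of the two endpoints of the chord of the classical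
crossing at position `j` (the circle traverses the strands in the cyclic order of `σ`). -/
noncomputable def chordEnds {n : ℕ} [NeZero n] (w : List (Letter n))
    (σ : Equiv.Perm (Fin n)) (j : ℕ) : ℕ × ℕ :=
  match w[j]? with
  | some (Letter.zeta i) =>
      (rankIn σ ((prefPerm w j)⁻¹ (lo i)) * w.length + j,
       rankIn σ ((prefPerm w j)⁻¹ (hi i)) * w.length + j)
  | _ => (0, 0)

/-- Two chords are linked iff the endpoints of one separate the endpoints of the
other on the core circle. -/
def LinkedChords {n : ℕ} [NeZero n] (w : List (Letter n)) (σ : Equiv.Perm (Fin n))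
    (j k : ℕ) : Prop :=
  Xor' (min (chordEnds w σ j).1 (chordEnds w σ j).2 < (chordEnds w σ k).1 ∧
        (chordEnds w σ k).1 < max (chordEnds w σ j).1 (chordEnds w σ j).2)
       (min (chordEnds w σ j).1 (chordEnds w σ j).2 < (chordEnds w σ k).2 ∧
        (chordEnds w σ k).2 < max (chordEnds w σ j).1 (chordEnds w σ j).2)

/-- The Gaussian parity of the classical crossing at position `j`: the mod-2 number
of chords linked with its chord. Even (`0`) iff linked with evenly many chords. -/
noncomputable def gaussParity {n : ℕ} [NeZero n] (w : List (Letter n))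
    (σ : Equiv.Perm (Fin n)) (j : ℕ) : ZMod 2 :=
  (Nat.card {k : ℕ // k < w.length ∧ k ∈ ZetaPos w ∧ k ≠ j ∧ LinkedChords w σ j k} : ZMod 2)


/-! ### Helper material for the proof -/

/-- The strand pair at the level of positions. -/
def e0 {n : ℕ} (i : Fin (n-1)) : Sym2 (Fin n) := s(lo i, hi i)

/-- Effect of a letter on a table of marks. -/
def act {n : ℕ} (g : Letter n) (S : Sym2 (Fin n) → ℕ → Bool) : Sym2 (Fin n) → ℕ → Bool :=
  fun e k => S (e.map (transOf g)) (k + if g.isZeta = true ∧ e = e0 g.idx then 1 else 0)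

def outL {n : ℕ} (g : Letter n) (S : Sym2 (Fin n) → ℕ → Bool) : List (Letter n) :=
  if (g.isZeta && S (e0 g.idx) 0) = true then [] else [g]

def stateL {n : ℕ} : List (Letter n) → (Sym2 (Fin n) → ℕ → Bool) → (Sym2 (Fin n) → ℕ → Bool)
  | [], S => S
  | g :: w, S => stateL w (act g S)

def DL {n : ℕ} : List (Letter n) → (Sym2 (Fin n) → ℕ → Bool) → List (Letter n)
  | [], _ => []
  | g :: w, S => outL g S ++ DL w (act g S)

theorem stateL_append {n : ℕ} (A B : List (Letter n)) (S) :
    stateL (A ++ B) S = stateL B (stateL A S) := by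
  induction A generalizing S with
  | nil => rfl
  | cons g A ih => simp [stateL, ih]

theorem DL_append {n : ℕ} (A B : List (Letter n)) (S) :
    DL (A ++ B) S = DL A S ++ DL B (stateL A S) := by
  induction A generalizing S with
  | nil => rfl
  | cons g A ih => simp [DL, stateL, ih]

theorem StrongEq.ctx {n : ℕ} {w1 w2 : List (Letter n)} (h : StrongEq w1 w2)
    (A B : List (Letter n)) : StrongEq (A ++ w1 ++ B) (A ++ w2 ++ B) := by
  induction h with
  | rel x y h =>
    obtain ⟨C, D, r1, r2, hr, rfl, rfl⟩ := h
    exact Relation.EqvGen.rel _ _ ⟨A ++ C, D ++ B, r1, r2, hr, by simp, by simp⟩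
  | refl => exact Relation.EqvGen.refl _
  | symm _ _ _ ih => exact Relation.EqvGen.symm _ _ ih
  | trans _ _ _ _ _ ih1 ih2 => exact Relation.EqvGen.trans _ _ _ ih1 ih2

theorem strong_of_rel {n : ℕ} {r1 r2 : List (Letter n)} (h : RelStrong n r1 r2) :
    StrongEq r1 r2 :=
  Relation.EqvGen.rel _ _ ⟨[], [], r1, r2, h, by simp, by simp⟩

theorem map_sPerm_sPerm {n : ℕ} (i : Fin (n-1)) (e : Sym2 (Fin n)) :
    (e.map (sPerm i)).map (sPerm i) = e := by
  rw [Sym2.map_map]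
  have : (sPerm i ∘ sPerm i : Fin n → Fin n) = id := by
    funext x; simp [sPerm]
  rw [this]; simp

theorem map_eq_iff {n : ℕ} (i : Fin (n-1)) (e f : Sym2 (Fin n)) :
    e.map (sPerm i) = f ↔ e = f.map (sPerm i) := by
  constructor
  · rintro rfl; rw [map_sPerm_sPerm]
  · rintro rfl; rw [map_sPerm_sPerm]

theorem e0_map {n : ℕ} (i : Fin (n-1)) : (e0 i).map (sPerm i) = e0 i := by
  simp [e0, sPerm, Sym2.eq_swap]

theorem sPerm_lo_ne {n : ℕ} (j : Fin (n-1)) (x : Fin n) (h1 : x.1 ≠ j.1) (h2 : x.1 ≠ j.1 + 1) :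
    sPerm j x = x := by
  apply Equiv.swap_apply_of_ne_of_ne
  · intro h; apply h1; rw [h]; rfl
  · intro h; apply h2; rw [h]; rfl

theorem far_ne {n : ℕ} {i j : Fin (n-1)} (h : 2 ≤ Nat.dist i j) :
    i.1 + 2 ≤ j.1 ∨ j.1 + 2 ≤ i.1 := by
  unfold Nat.dist at h; omega

theorem e0_far {n : ℕ} {i j : Fin (n-1)} (h : 2 ≤ Nat.dist i j) :
    (e0 i).map (sPerm j) = e0 i := by
  have := far_ne h
  simp only [e0, Sym2.map_mk]
  rw [sPerm_lo_ne j (lo i), sPerm_lo_ne j (hi i)] <;> simp only [lo, hi] <;> omega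

theorem e0_inj {n : ℕ} {i j : Fin (n-1)} (h : e0 i = e0 j) : i.1 = j.1 := by
  simp only [e0, lo, hi, Sym2.eq_iff, Fin.mk.injEq] at h
  omega

theorem far_comm {n : ℕ} {i j : Fin (n-1)} (h : 2 ≤ Nat.dist i j) (e : Sym2 (Fin n)) :
    (e.map (sPerm i)).map (sPerm j) = (e.map (sPerm j)).map (sPerm i) := by
  rw [Sym2.map_map, Sym2.map_map]
  congr 1
  have := far_ne h
  have hd : (sPerm i).Disjoint (sPerm j) := by
    intro x
    by_cases hx : x.1 = i.1 ∨ x.1 = i.1 + 1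
    · right; apply sPerm_lo_ne <;> omega
    · left; apply sPerm_lo_ne <;> omega
  have := hd.commute
  funext x
  exact (congrArg (fun f : Equiv.Perm (Fin n) => f x) this.eq).symm

theorem sPerm_val {n : ℕ} (i : Fin (n-1)) (x : Fin n) :
    (sPerm i x).1 = if x.1 = i.1 then i.1 + 1 else if x.1 = i.1 + 1 then i.1 else x.1 := by
  simp only [sPerm, Equiv.swap_apply_def, lo, hi, Fin.ext_iff]
  split_ifs <;> rfl

theorem braid_rel {n : ℕ} {i j : Fin (n-1)} (h : (j:ℕ) = (i:ℕ) + 1) (e : Sym2 (Fin n)) :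
    ((e.map (sPerm i)).map (sPerm j)).map (sPerm i) =
    ((e.map (sPerm j)).map (sPerm i)).map (sPerm j) := by
  simp only [Sym2.map_map]
  congr 1
  funext x
  apply Fin.ext
  simp only [Function.comp, sPerm_val]
  split_ifs <;> omega

theorem e0_semi {n : ℕ} {i j : Fin (n-1)} (h : (j:ℕ) = (i:ℕ) + 1) :
    ((e0 i).map (sPerm j)).map (sPerm i) = e0 j := by
  simp only [e0, Sym2.map_mk]
  have h1 : sPerm i (sPerm j (lo i)) = lo j := by
    apply Fin.ext; simp only [sPerm_val, lo]; split_ifs <;> omega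
  have h2 : sPerm i (sPerm j (hi i)) = hi j := by
    apply Fin.ext; simp only [sPerm_val, hi]; split_ifs <;> omega
  rw [h1, h2]

theorem e0_semi' {n : ℕ} {i j : Fin (n-1)} (h : (j:ℕ) = (i:ℕ) + 1) :
    ((e0 j).map (sPerm i)).map (sPerm j) = e0 i := by
  rw [← e0_semi h, map_sPerm_sPerm, map_sPerm_sPerm]

theorem dist_symm' {n : ℕ} {i j : Fin (n-1)} (h : 2 ≤ Nat.dist i j) : 2 ≤ Nat.dist j i := by
  rwa [Nat.dist_comm]

theorem rel_state {n : ℕ} {r1 r2 : List (Letter n)} (h : RelStrong n r1 r2) (S) :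
    stateL r1 S = stateL r2 S := by
  funext e k
  cases h with
  | tt i => simp [stateL, act, Letter.isZeta, transOf, Letter.idx, map_sPerm_sPerm]
  | virt i =>
    simp [stateL, act, Letter.isZeta, transOf, Letter.idx, map_sPerm_sPerm, map_eq_iff, e0_map]
  | far_zz i j h =>
    have h' := dist_symm' h
    simp only [stateL, act, Letter.isZeta, transOf, Letter.idx, map_eq_iff, e0_far h, e0_far h',
      far_comm h]
    congr 1; simp only [true_and]; omega
  | far_zt i j h =>
    simp [stateL, act, Letter.isZeta, transOf, Letter.idx, map_eq_iff, e0_far h, far_comm h]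
  | far_tt i j h =>
    simp [stateL, act, Letter.isZeta, transOf, Letter.idx, far_comm h]
  | r3v i j h =>
    simp [stateL, act, Letter.isZeta, transOf, Letter.idx, braid_rel h]
  | semi i j h =>
    simp [stateL, act, Letter.isZeta, transOf, Letter.idx, braid_rel h, map_eq_iff, e0_semi' h]

theorem rel_D {n : ℕ} {r1 r2 : List (Letter n)} (h : RelStrong n r1 r2) (S) :
    StrongEq (DL r1 S) (DL r2 S) := by
  have hr := strong_of_rel h
  have rf : ∀ w : List (Letter n), StrongEq w w := fun w => Relation.EqvGen.refl _
  cases h with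
  | tt i => simpa [DL, outL, Letter.isZeta] using hr
  | virt i =>
    simp only [DL, outL, act, Letter.isZeta, transOf, Letter.idx, e0_map]
    by_cases hb : S (e0 i) 0 = true <;> simp [hb] <;> first | exact hr | exact rf _
  | far_zz i j h =>
    have h' := dist_symm' h
    have hne : e0 i ≠ e0 j := fun hh => by have := e0_inj hh; have := far_ne h; omega
    have hne' := hne.symm
    simp only [DL, outL, act, Letter.isZeta, transOf, Letter.idx, e0_far h, e0_far h', hne, hne']
    by_cases hb : S (e0 i) 0 = true <;> by_cases hb' : S (e0 j) 0 = true <;> simp [hb, hb'] <;>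
      first | exact hr | exact rf _
  | far_zt i j h =>
    simp only [DL, outL, act, Letter.isZeta, transOf, Letter.idx, e0_far h]
    by_cases hb : S (e0 i) 0 = true <;> simp [hb] <;> first | exact hr | exact rf _
  | far_tt i j h => simpa [DL, outL, Letter.isZeta] using hr
  | r3v i j h => simpa [DL, outL, Letter.isZeta] using hr
  | semi i j h =>
    simp only [DL, outL, act, Letter.isZeta, transOf, Letter.idx, e0_semi h]
    by_cases hb : S (e0 j) 0 = true <;> simp [hb, e0_semi h] <;> first | exact hr | exact rf _

theorem strong_D {n : ℕ} {w1 w2 : List (Letter n)} (h : StrongEq w1 w2) (S) :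
    StrongEq (DL w1 S) (DL w2 S) := by
  induction h with
  | rel x y h =>
    obtain ⟨A, B, r1, r2, hr, rfl, rfl⟩ := h
    simp only [DL_append, stateL_append, rel_state hr]
    exact (rel_D hr _).ctx _ _
  | refl => exact Relation.EqvGen.refl _
  | symm _ _ _ ih => exact Relation.EqvGen.symm _ _ ih
  | trans _ _ _ _ _ ih1 ih2 => exact Relation.EqvGen.trans _ _ _ ih1 ih2

open Classical in
/-- Number of classical crossings before position `j` on the pair `e`. -/
noncomputable def cnt {n : ℕ} (w : List (Letter n)) (j : ℕ) (e : Sym2 (Fin n)) : ℕ :=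
  ((Finset.range j).filter (fun k => k ∈ ZetaPos w ∧ strandsAt w k = some e)).card

theorem prefPerm_succ {n : ℕ} (w : List (Letter n)) (j : ℕ) (g : Letter n) (h : w[j]? = some g) :
    prefPerm w (j+1) = transOf g * prefPerm w j := by
  simp [prefPerm, List.take_add_one, h]

theorem zeta_iff {n : ℕ} {w : List (Letter n)} {j : ℕ} {g : Letter n} (h : w[j]? = some g) :
    j ∈ ZetaPos w ↔ g.isZeta = true := by
  simp only [ZetaPos, Set.mem_setOf_eq, h]
  cases g <;> simp [Letter.isZeta]

theorem strands_eq {n : ℕ} {w : List (Letter n)} {j : ℕ} {g : Letter n} (h : w[j]? = some g) :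
    strandsAt w j = some ((e0 g.idx).map ⇑(prefPerm w j)⁻¹) := by
  simp [strandsAt, h, e0]

theorem map_perm_inv {n : ℕ} (p : Equiv.Perm (Fin n)) (e f : Sym2 (Fin n)) :
    e.map ⇑p⁻¹ = f ↔ e = f.map p := by
  constructor
  · rintro rfl
    rw [Sym2.map_map]
    have : (p ∘ (p⁻¹ : Equiv.Perm (Fin n)) : Fin n → Fin n) = id := by funext x; simp
    rw [this]; simp
  · rintro rfl
    rw [Sym2.map_map]
    have : ((p⁻¹ : Equiv.Perm (Fin n)) ∘ p : Fin n → Fin n) = id := by funext x; simp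
    rw [this]; simp

theorem cnt_succ {n : ℕ} (w : List (Letter n)) (j : ℕ) (e : Sym2 (Fin n)) (g : Letter n)
    (h : w[j]? = some g) :
    cnt w (j+1) e = cnt w j e +
      if g.isZeta = true ∧ e.map (prefPerm w j) = e0 g.idx then 1 else 0 := by
  classical
  unfold cnt
  rw [Finset.range_add_one, Finset.filter_insert, zeta_iff h, strands_eq h]
  simp only [Option.some.injEq, map_perm_inv]
  by_cases hc : g.isZeta = true ∧ e0 g.idx = e.map (prefPerm w j)
  · rw [if_pos hc, Finset.card_insert_of_notMem (by simp), if_pos ⟨hc.1, hc.2.symm⟩]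
  · rw [if_neg hc, if_neg (fun h => hc ⟨h.1, h.2.symm⟩)]; rfl

theorem state_take {n : ℕ} (w : List (Letter n)) (S) (j : ℕ) (hj : j ≤ w.length) :
    ∀ e k, stateL (w.take j) S (e.map (prefPerm w j)) k = S e (k + cnt w j e) := by
  induction j with
  | zero => intro e k; simp [stateL, prefPerm, cnt]
  | succ j ih =>
    intro e k
    have hg : w[j]? = some w[j] := List.getElem?_eq_getElem (by omega)
    rw [cnt_succ w j e _ hg, prefPerm_succ w j _ hg, List.take_add_one, hg, stateL_append]
    simp only [Option.toList, stateL, act]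
    have h1 : (e.map (transOf w[j] * prefPerm w j)).map (transOf w[j]) = e.map (prefPerm w j) := by
      rw [Equiv.Perm.coe_mul, ← Sym2.map_map]; exact map_sPerm_sPerm _ _
    have h2 : e.map (transOf w[j] * prefPerm w j) = e0 w[j].idx ↔
        e.map (prefPerm w j) = e0 w[j].idx := by
      rw [Equiv.Perm.coe_mul, ← Sym2.map_map, transOf, map_eq_iff, e0_map]
    rw [h1, ih (by omega)]
    simp only [h2]
    congr 1; omega

/-- Delete the positions satisfying `P`. -/
def delP {α : Type*} : List α → (ℕ → Bool) → List α
  | [], _ => []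
  | g :: w, P => (if P 0 = true then [] else [g]) ++ delP w (fun k => P (k+1))

theorem delP_false {α : Type*} (w : List α) (P : ℕ → Bool) (h : ∀ k, P k = false) :
    delP w P = w := by
  induction w generalizing P with
  | nil => rfl
  | cons g w ih => simp [delP, h, ih]

theorem delP_one {α : Type*} (w : List α) (j : ℕ) :
    delP w (fun k => decide (k = j)) = w.eraseIdx j := by
  induction w generalizing j with
  | nil => rfl
  | cons g w ih =>
    cases j with
    | zero => simp [delP, delP_false]
    | succ j => simp [delP, ih]

theorem delP_two {α : Type*} (w : List α) (j1 j2 : ℕ) (h : j1 < j2) :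
    delP w (fun k => decide (k = j1 ∨ k = j2)) = (w.eraseIdx j2).eraseIdx j1 := by
  induction w generalizing j1 j2 with
  | nil => rfl
  | cons g w ih =>
    obtain ⟨j2, rfl⟩ : ∃ m, j2 = m + 1 := ⟨j2 - 1, by omega⟩
    cases j1 with
    | zero =>
      have := delP_one w j2
      simpa [delP] using this
    | succ j1 =>
      have := ih j1 j2 (by omega)
      simpa [delP] using this

theorem DL_delP {n : ℕ} (w : List (Letter n)) (S) (P : ℕ → Bool)
    (h : ∀ j g, w[j]? = some g → P j = (g.isZeta && stateL (w.take j) S (e0 g.idx) 0)) :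
    DL w S = delP w P := by
  induction w generalizing S P with
  | nil => rfl
  | cons g w ih =>
    have h0 := h 0 g (by simp)
    simp only [DL, delP, outL, h0, List.take_zero, stateL]
    rw [ih (act g S) (fun k => P (k+1))]
    intro j g' hj
    have := h (j+1) g' (by simpa using hj)
    simpa [stateL] using this

theorem cnt_lt {n : ℕ} {w : List (Letter n)} {j j' : ℕ} {e : Sym2 (Fin n)} (hlt : j < j')
    (hj : j ∈ ZetaPos w) (he : strandsAt w j = some e) : cnt w j e < cnt w j' e := by
  classical
  apply Finset.card_lt_card
  refine ⟨fun x hx => ?_, fun hsub => ?_⟩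
  · simp only [Finset.mem_filter, Finset.mem_range] at hx ⊢
    exact ⟨by omega, hx.2⟩
  · have : j ∈ (Finset.range j).filter (fun k => k ∈ ZetaPos w ∧ strandsAt w k = some e) := by
      apply hsub; simp [hlt, hj, he]
    simp at this

theorem cnt_inj {n : ℕ} {w : List (Letter n)} {j j' : ℕ} {e : Sym2 (Fin n)}
    (hj : j ∈ ZetaPos w) (hj' : j' ∈ ZetaPos w) (he : strandsAt w j = some e)
    (he' : strandsAt w j' = some e) (hc : cnt w j e = cnt w j' e) : j = j' := by
  rcases lt_trichotomy j j' with h | h | h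
  · have := cnt_lt h hj he; omega
  · exact h
  · have := cnt_lt h hj' he'; omega

open Classical in
noncomputable def markS {n : ℕ} (e : Sym2 (Fin n)) (c1 c2 : ℕ) : Sym2 (Fin n) → ℕ → Bool :=
  fun f k => decide (f = e ∧ (k = c1 ∨ k = c2))

theorem delete2_eq {n : ℕ} (w : List (Letter n)) (j1 j2 : ℕ) (e : Sym2 (Fin n)) (hlt : j1 < j2)
    (h1 : j1 ∈ ZetaPos w) (h2 : j2 ∈ ZetaPos w) (he1 : strandsAt w j1 = some e)
    (he2 : strandsAt w j2 = some e) :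
    delete2 w j1 j2 = DL w (markS e (cnt w j1 e) (cnt w j2 e)) := by
  rw [delete2, max_eq_right hlt.le, min_eq_left hlt.le, ← delP_two w j1 j2 hlt]
  symm
  apply DL_delP
  intro j g hg
  have hjl : j < w.length := by
    by_contra hh; rw [List.getElem?_eq_none (by omega)] at hg; cases hg
  have hst := strands_eq hg
  have hz := zeta_iff hg
  obtain ⟨f, hf⟩ : ∃ f, f = (e0 g.idx).map ⇑(prefPerm w j)⁻¹ := ⟨_, rfl⟩
  rw [← hf] at hst
  have hf' : e0 g.idx = f.map (prefPerm w j) := (map_perm_inv _ _ _).1 hf.symm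
  rw [hf', state_take w _ j hjl.le]
  rw [Bool.eq_iff_iff, Bool.and_eq_true, ← hz]
  simp only [markS, decide_eq_true_eq, zero_add]
  constructor
  · rintro (rfl | rfl)
    · have : f = e := by rw [he1] at hst; exact (Option.some.inj hst).symm
      subst this; exact ⟨h1, rfl, Or.inl rfl⟩
    · have : f = e := by rw [he2] at hst; exact (Option.some.inj hst).symm
      subst this; exact ⟨h2, rfl, Or.inr rfl⟩
  · rintro ⟨hj, rfl, hc | hc⟩
    · exact Or.inl (cnt_inj hj h1 hst he1 hc)
    · exact Or.inr (cnt_inj hj h2 hst he2 hc)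

theorem sym2_exists {α : Type*} (e : Sym2 α) : ∃ a, a ∈ e :=
  Sym2.ind (fun a b => ⟨a, Sym2.mem_mk_left a b⟩) e

theorem gamma_order {n : ℕ} {w1 w2 : List (Letter n)} {φ : ℕ → ℕ} (hφ : IsGammaIso w1 w2 φ)
    {j j' : ℕ} (hj : j ∈ ZetaPos w1) (hj' : j' ∈ ZetaPos w1) {e e' : Sym2 (Fin n)} {a : Fin n}
    (he : strandsAt w1 j = some e) (he' : strandsAt w1 j' = some e') (ha : a ∈ e) (ha' : a ∈ e') :
    φ j < φ j' ↔ j < j' := by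
  constructor
  · intro h
    rcases lt_trichotomy j j' with h' | h' | h'
    · exact h'
    · subst h'; omega
    · have := hφ.order j' hj' j hj h' ⟨e', e, a, he', he, ha', ha⟩; omega
  · intro h
    exact hφ.order j hj j' hj' h ⟨e, e', a, he, he', ha, ha'⟩

theorem gamma_cnt {n : ℕ} {w1 w2 : List (Letter n)} {φ : ℕ → ℕ} (hφ : IsGammaIso w1 w2 φ)
    {j : ℕ} (hj : j ∈ ZetaPos w1) {e : Sym2 (Fin n)} (he : strandsAt w1 j = some e) :
    cnt w1 j e = cnt w2 (φ j) e := by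
  classical
  obtain ⟨a, ha⟩ := sym2_exists e
  apply Finset.card_bij (fun k _ => φ k)
  · intro k hk
    simp only [Finset.mem_filter, Finset.mem_range] at hk ⊢
    exact ⟨(gamma_order hφ hk.2.1 hj hk.2.2 he ha ha).2 hk.1, hφ.maps k hk.2.1,
      (hφ.strands k hk.2.1).trans hk.2.2⟩
  · intro k hk k' hk' h
    simp only [Finset.mem_filter, Finset.mem_range] at hk hk'
    exact hφ.inj k hk.2.1 k' hk'.2.1 h
  · intro m hm
    simp only [Finset.mem_filter, Finset.mem_range] at hm
    obtain ⟨k, hk, rfl⟩ := hφ.surj m hm.2.1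
    have hs := (hφ.strands k hk).symm.trans hm.2.2
    refine ⟨k, ?_, rfl⟩
    simp only [Finset.mem_filter, Finset.mem_range]
    exact ⟨(gamma_order hφ hk hj hs he ha ha).1 hm.1, hk, hs⟩

/-- if `β₁, β₂` are strongly equivalent and `u = φ` is the induced
bijection of classical crossings, then bigons map to bigons, and the corresponding
bigon reductions produce strongly equivalent words. -/
theorem bigon_transported (n : ℕ) (w1 w2 : List (Letter n)) (φ : ℕ → ℕ)
    (hse : StrongEq w1 w2) (hφ : IsGammaIso w1 w2 φ)
    (j1 j2 : ℕ) (h : IsBigon w1 j1 j2) :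
    IsBigon w2 (φ j1) (φ j2) ∧
    StrongEq (delete2 w1 j1 j2) (delete2 w2 (φ j1) (φ j2)) := by
  obtain ⟨hlt, h1, h2, hs, hb⟩ := h
  obtain ⟨i1, hi1⟩ := id h1
  have he1 := strands_eq hi1
  generalize (e0 (Letter.zeta i1).idx).map ⇑(prefPerm w1 j1)⁻¹ = e at he1
  have he2 : strandsAt w1 j2 = some e := hs.symm.trans he1
  obtain ⟨a, ha⟩ := sym2_exists e
  have hlt' : φ j1 < φ j2 := (gamma_order hφ h1 h2 he1 he2 ha ha).2 hlt
  have he1' := (hφ.strands j1 h1).trans he1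
  have he2' := (hφ.strands j2 h2).trans he2
  refine ⟨⟨hlt', hφ.maps j1 h1, hφ.maps j2 h2, he1'.trans he2'.symm, ?_⟩, ?_⟩
  · intro m hm1 hm2 hm f f' hf hf' b hbf hbf'
    obtain ⟨k, hk, rfl⟩ := hφ.surj m hm
    have hfe : f = e := by rw [he1'] at hf; exact (Option.some.inj hf).symm
    subst hfe
    have hks := (hφ.strands k hk).symm.trans hf'
    exact hb k ((gamma_order hφ h1 hk he1 hks hbf hbf').1 hm1)
      ((gamma_order hφ hk h2 hks he2 hbf' hbf).1 hm2) hk f f' he1 hks b hbf hbf'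
  · rw [delete2_eq w1 j1 j2 e hlt h1 h2 he1 he2,
      delete2_eq w2 (φ j1) (φ j2) e hlt' (hφ.maps j1 h1) (hφ.maps j2 h2) he1' he2',
      gamma_cnt hφ h1 he1, gamma_cnt hφ h2 he2]
    exact strong_D hse _

end OneTermBracket
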